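/- arXiv:math/0606213 — 3 statements merged into one kernel-verified Lean document; each statement's English description precedes it below -/
import Mathlib

section
/- If k_i = 1 (i.e. the fundamental coweight ω_i is minuscule), then ω_i is an extreme point of the closure of Ω. Consequently the minuscule part ∂_mΩ = W·{ω_i : k_i = 1} of the boundary of Ω is contained in the set ∂_eΩ of extreme points of the closure of Ω. -/
open scoped RealInnerProductSpace

section helpers
variable {E : Type*} [NormedAddCommGroup E] [InnerProductSpace ℝ E]

lemma aux_symm (g x y : E) :
    ⟪x, y - (2 * ⟪g, y⟫ / ⟪g, g⟫) • g⟫ = ⟪x - (2 * ⟪g, x⟫ / ⟪g, g⟫) • g, y⟫ := by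
  rw [inner_sub_right, inner_sub_left, inner_smul_right, real_inner_smul_left,
    real_inner_comm g x]
  ring

lemma aux_invol (g : E) (hg : g ≠ 0) (y : E) :
    (y - (2 * ⟪g, y⟫ / ⟪g, g⟫) • g) -
      (2 * ⟪g, y - (2 * ⟪g, y⟫ / ⟪g, g⟫) • g⟫ / ⟪g, g⟫) • g = y := by
  have h : ⟪g, g⟫ ≠ (0 : ℝ) := inner_self_ne_zero.mpr hg
  have h2 : ⟪g, y - (2 * ⟪g, y⟫ / ⟪g, g⟫) • g⟫ = - ⟪g, y⟫ := by
    rw [inner_sub_right, inner_smul_right]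
    field_simp
    ring
  rw [h2, mul_neg, neg_div, neg_smul]
  abel

/-- Vertex criterion. -/
def GoodPt (R : Set E) (x : E) : Prop :=
  (∀ α ∈ R, |⟪α, x⟫| ≤ 1) ∧ ∀ D : E, (∀ α ∈ R, ⟪α, x⟫ = 1 → ⟪α, D⟫ = 0) → D = 0

lemma aux_closure (R : Set E) :
    closure {Y : E | ∀ α ∈ R, |⟪α, Y⟫| < 1} = {Y : E | ∀ α ∈ R, |⟪α, Y⟫| ≤ 1} := by
  apply Set.Subset.antisymm
  · apply closure_minimal
    · intro Y hY α hα
      exact (hY α hα).le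
    · have : {Y : E | ∀ α ∈ R, |⟪α, Y⟫| ≤ 1} = ⋂ α ∈ R, {Y : E | |⟪α, Y⟫| ≤ 1} := by
        ext Y; simp
      rw [this]
      refine isClosed_biInter fun α _ => isClosed_le ?_ continuous_const
      fun_prop
  · intro Y hY
    have ht : Filter.Tendsto (fun t : ℝ => t • Y) (nhdsWithin 1 (Set.Ioo 0 1)) (nhds Y) := by
      have h : Continuous (fun t : ℝ => t • Y) := by fun_prop
      have := h.tendsto 1
      rw [one_smul] at this
      exact this.mono_left nhdsWithin_le_nhds
    have : (nhdsWithin (1 : ℝ) (Set.Ioo 0 1)).NeBot := right_nhdsWithin_Ioo_neBot one_pos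
    refine mem_closure_of_tendsto ht ?_
    filter_upwards [self_mem_nhdsWithin] with t ht α hα
    rw [inner_smul_right, abs_mul, abs_of_pos ht.1]
    have := hY α hα
    have h1 := ht.1
    have h2 := ht.2
    have h3 := abs_nonneg ⟪α, Y⟫
    nlinarith

lemma GoodPt.extreme {R : Set E} {x : E} (h : GoodPt R x) :
    x ∈ Set.extremePoints ℝ {Y : E | ∀ α ∈ R, |⟪α, Y⟫| ≤ 1} := by
  rw [mem_extremePoints]
  refine ⟨h.1, ?_⟩
  intro y hy z hz hx
  obtain ⟨p, q, hp, hq, hpq, rfl⟩ := hx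
  have key : ∀ α ∈ R, ⟪α, p • y + q • z⟫ = 1 → ⟪α, y⟫ = 1 ∧ ⟪α, z⟫ = 1 := by
    intro α hα h1
    have hy1 := (abs_le.1 (hy α hα)).2
    have hz1 := (abs_le.1 (hz α hα)).2
    rw [inner_add_right, inner_smul_right, inner_smul_right] at h1
    constructor <;> nlinarith
  constructor
  · apply sub_eq_zero.1
    apply h.2
    intro α hα h1
    rw [inner_sub_right, h1, (key α hα h1).1, sub_self]
  · apply sub_eq_zero.1
    apply h.2
    intro α hα h1
    rw [inner_sub_right, h1, (key α hα h1).2, sub_self]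

lemma GoodPt.refl {R : Set E} (hR0 : (0 : E) ∉ R)
    (hRinv : ∀ α ∈ R, ∀ γ ∈ R, γ - (2 * ⟪α, γ⟫ / ⟪α, α⟫) • α ∈ R) {x : E}
    (h : GoodPt R x) {g : E} (hg : g ∈ R) :
    GoodPt R (x - (2 * ⟪g, x⟫ / ⟪g, g⟫) • g) := by
  have hg0 : g ≠ 0 := fun e => hR0 (e ▸ hg)
  constructor
  · intro α hα
    rw [aux_symm]
    exact h.1 _ (hRinv g hg α hα)
  · intro D hD
    have h0 : D - (2 * ⟪g, D⟫ / ⟪g, g⟫) • g = 0 := by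
      apply h.2
      intro α hα h1
      rw [aux_symm]
      apply hD _ (hRinv g hg α hα)
      rw [aux_symm, aux_invol g hg0]
      exact h1
    have := aux_invol g hg0 D
    rw [h0] at this
    simpa using this.symm

end helpers

/-- in the setting of an irreducible reduced crystallographic root
system `R` spanning `𝔞`, with base `a`, highest root `β = ∑ kᵢ aᵢ`, fundamental
coweights `ω i` and polyhedron `Ω = {Y : |⟪α,Y⟫| < 1 ∀ α ∈ R}`: if `k i = 1`
(i.e. `ω i` is minuscule) then `ω i` is an extreme point of the closure of `Ω`;
consequently the minuscule part `∂ₘΩ = W·{ωᵢ : kᵢ = 1}` of the boundary (the Weyl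
group `W` realized as the monoid generated by the root reflections, which are
involutions) is contained in the set `∂ₑΩ` of extreme points of the closure of `Ω`. -/
theorem stmt_2 {𝔞 : Type*} [NormedAddCommGroup 𝔞] [InnerProductSpace ℝ 𝔞]
    [FiniteDimensional ℝ 𝔞]
    (R : Set 𝔞) (hRfin : R.Finite) (hR0 : (0 : 𝔞) ∉ R)
    (hRspan : Submodule.span ℝ R = ⊤)
    (hRinv : ∀ α ∈ R, ∀ γ ∈ R, γ - (2 * ⟪α, γ⟫ / ⟪α, α⟫) • α ∈ R)
    (hcrys : ∀ α ∈ R, ∀ γ ∈ R, ∃ m : ℤ, (m : ℝ) = 2 * ⟪α, γ⟫ / ⟪α, α⟫)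
    (hred : ∀ α ∈ R, ∀ c : ℝ, c • α ∈ R → c = 1 ∨ c = -1)
    (n : ℕ) (a : Fin n → 𝔞) (ha : ∀ i, a i ∈ R)
    (haind : LinearIndependent ℝ a)
    (hbase : ∀ α ∈ R, ∃ c : Fin n → ℤ, ((∀ i, 0 ≤ c i) ∨ (∀ i, c i ≤ 0)) ∧
        α = ∑ i, (c i : ℝ) • a i)
    (hirr : ¬ ∃ S T : Set (Fin n), S ∪ T = Set.univ ∧ S.Nonempty ∧ T.Nonempty ∧
        Disjoint S T ∧ ∀ s ∈ S, ∀ t ∈ T, ⟪a s, a t⟫ = 0)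
    (k : Fin n → ℕ) (hkpos : ∀ i, 0 < k i)
    (β : 𝔞) (hβR : β ∈ R) (hβsum : β = ∑ i, (k i : ℝ) • a i)
    (hhigh : ∀ α ∈ R, ∀ c : Fin n → ℝ, α = ∑ i, c i • a i → ∀ i, c i ≤ (k i : ℝ))
    (ω : Fin n → 𝔞) (hω : ∀ i j, ⟪a j, ω i⟫ = if i = j then (1 : ℝ) else 0)
    (Ω : Set 𝔞) (hΩ : Ω = {Y : 𝔞 | ∀ α ∈ R, |⟪α, Y⟫| < 1}) :
    (∀ i : Fin n, k i = 1 → ω i ∈ Set.extremePoints ℝ (closure Ω)) ∧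
    (∀ w ∈ Submonoid.closure
        {f : Function.End 𝔞 | ∃ α ∈ R, f = fun v => v - (2 * ⟪α, v⟫ / ⟪α, α⟫) • α},
      ∀ i : Fin n, k i = 1 → (w : 𝔞 → 𝔞) (ω i) ∈ Set.extremePoints ℝ (closure Ω)) := by
  have neg_mem : ∀ α ∈ R, -α ∈ R := by
    intro α hα
    have h : ⟪α, α⟫ ≠ (0 : ℝ) := inner_self_ne_zero.mpr (fun e => hR0 (e ▸ hα))
    have h2 := hRinv α hα α hα
    rw [mul_div_assoc, div_self h] at h2
    convert h2 using 1
    module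
  have coef : ∀ (c : Fin n → ℝ) (i : Fin n), ⟪∑ j, c j • a j, ω i⟫ = c i := by
    intro c i
    simp [sum_inner, real_inner_smul_left, hω]
  have good : ∀ i : Fin n, k i = 1 → GoodPt R (ω i) := by
    intro i hi
    have le1 : ∀ α ∈ R, ⟪α, ω i⟫ ≤ 1 := by
      intro α hα
      obtain ⟨c, -, hc⟩ := hbase α hα
      have := hhigh α hα _ hc i
      rw [hi] at this
      rw [hc, coef (fun j => (c j : ℝ)) i]
      simpa using this
    refine ⟨fun α hα => abs_le.2 ⟨?_, le1 α hα⟩, ?_⟩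
    · have := le1 _ (neg_mem α hα)
      rw [inner_neg_left] at this
      linarith
    set M : Submodule ℝ 𝔞 := Submodule.span ℝ {α | α ∈ R ∧ ⟪α, ω i⟫ = 1} with hM
    have aiM : a i ∈ M := Submodule.subset_span ⟨ha i, by simp [hω]⟩
    have orth : ∀ t, a t ∉ M → ∀ v ∈ M, ⟪v, a t⟫ = 0 := by
      intro t ht v hv
      have hit : i ≠ t := fun e => ht (e ▸ aiM)
      induction hv using Submodule.span_induction with
      | mem v hv =>
        by_contra hne
        apply ht
        have hat : ⟪a t, a t⟫ ≠ (0 : ℝ) :=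
          inner_self_ne_zero.mpr (fun e => hR0 (e ▸ ha t))
        have hc : 2 * ⟪a t, v⟫ / ⟪a t, a t⟫ ≠ (0 : ℝ) := by
          rw [real_inner_comm]
          exact div_ne_zero (mul_ne_zero two_ne_zero hne) hat
        have h1 : v - (2 * ⟪a t, v⟫ / ⟪a t, a t⟫) • a t ∈ M := by
          refine Submodule.subset_span ⟨hRinv _ (ha t) _ hv.1, ?_⟩
          rw [inner_sub_left, real_inner_smul_left, hω, if_neg hit, hv.2]
          simp
        have h2 : v ∈ M := Submodule.subset_span hv
        have h3 := M.sub_mem h2 h1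
        rw [sub_sub_cancel] at h3
        exact (M.smul_mem_iff hc).1 h3
      | zero => simp
      | add x y _ _ hx hy => rw [inner_add_left, hx, hy, add_zero]
      | smul c x _ hx => rw [real_inner_smul_left, hx, mul_zero]
    have all : ∀ t, a t ∈ M := by
      by_contra hcon
      push Not at hcon
      obtain ⟨t, ht⟩ := hcon
      apply hirr
      refine ⟨{j | a j ∈ M}, {j | a j ∉ M}, ?_, ⟨i, aiM⟩, ⟨t, ht⟩, ?_, ?_⟩
      · ext j; simp [em]
      · rw [Set.disjoint_left]
        intro j h1 h2
        exact h2 h1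
      · intro s hs t ht
        exact orth t ht _ hs
    have top : M = ⊤ := by
      rw [eq_top_iff, ← hRspan, Submodule.span_le]
      intro α hα
      obtain ⟨c, -, hc⟩ := hbase α hα
      rw [hc]
      exact M.sum_mem fun j _ => M.smul_mem _ (all j)
    intro D hD
    have hz : ∀ v ∈ M, ⟪v, D⟫ = 0 := by
      intro v hv
      induction hv using Submodule.span_induction with
      | mem v hv => exact hD v hv.1 hv.2
      | zero => simp
      | add x y _ _ hx hy => rw [inner_add_left, hx, hy, add_zero]
      | smul c x _ hx => rw [real_inner_smul_left, hx, mul_zero]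
    exact inner_self_eq_zero.1 (hz D (top ▸ Submodule.mem_top))
  rw [hΩ, aux_closure]
  refine ⟨fun i hi => (good i hi).extreme, ?_⟩
  intro w hw i hi
  have pres : ∀ x : 𝔞, GoodPt R x → GoodPt R ((w : 𝔞 → 𝔞) x) := by
    induction hw using Submonoid.closure_induction with
    | mem f hf =>
      obtain ⟨α, hα, rfl⟩ := hf
      intro x hx
      exact hx.refl hR0 hRinv hα
    | one => intro x hx; exact hx
    | mul f g _ _ hf hg => intro x hx; exact hf _ (hg _ hx)
  exact (pres _ (good i hi)).extreme
end

section
/- One has the equality of subsets of SL(2,ℂ): ⋃_{θ ∈ (−π/4, π/4)} SL(2,ℝ)·diag(e^{iθ}, e^{−iθ})·SO(2,ℂ) = ⋃_{x ∈ (−1, 1)} SL(2,ℝ)·u_x·SO(2,ℂ), where u_x is the matrix with rows (1, i·x) and (0, 1). (The left-hand side is the preimage in SL(2,ℂ) of the crown domain Ξ of SL(2,ℝ)/SO(2); thus Ξ = G·exp(iΛ)·x₀ with Λ the set of strictly upper triangular real matrices with entry x, |x| < 1.) -/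
open Matrix

/-- `SL(2,ℝ)` viewed as the set of real-entried matrices in `SL(2,ℂ)`. -/
def SL2R : Set (Matrix (Fin 2) (Fin 2) ℂ) :=
  {g | g.det = 1 ∧ ∀ i j, (g i j).im = 0}

/-- `SO(2,ℂ) = {k ∈ SL(2,ℂ) : kᵀ·k = 1}`. -/
def SO2C : Set (Matrix (Fin 2) (Fin 2) ℂ) :=
  {k | k.det = 1 ∧ kᵀ * k = 1}

lemma SL2R_mul {g h : Matrix (Fin 2) (Fin 2) ℂ} (hg : g ∈ SL2R) (hh : h ∈ SL2R) :
    g * h ∈ SL2R := by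
  refine ⟨by rw [det_mul, hg.1, hh.1, mul_one], fun i j => ?_⟩
  simp [Matrix.mul_apply, Fin.sum_univ_two, Complex.mul_im, hg.2, hh.2]

lemma SO2C_mul {g h : Matrix (Fin 2) (Fin 2) ℂ} (hg : g ∈ SO2C) (hh : h ∈ SO2C) :
    g * h ∈ SO2C := by
  refine ⟨by rw [det_mul, hg.1, hh.1, mul_one], ?_⟩
  rw [transpose_mul, Matrix.mul_assoc, ← Matrix.mul_assoc gᵀ, hg.2, Matrix.one_mul, hh.2]

lemma SO2C_transpose {k : Matrix (Fin 2) (Fin 2) ℂ} (hk : k ∈ SO2C) : kᵀ ∈ SO2C := by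
  refine ⟨by rw [det_transpose, hk.1], ?_⟩
  rw [transpose_transpose]
  exact mul_eq_one_comm.mp hk.2

lemma SL2R_inv {g : Matrix (Fin 2) (Fin 2) ℂ} (hg : g ∈ SL2R) :
    g.adjugate ∈ SL2R := by
  refine ⟨by rw [det_adjugate, hg.1, one_pow], fun i j => ?_⟩
  rw [adjugate_fin_two]
  fin_cases i <;> fin_cases j <;> simp [hg.2]

lemma key_factor {A B g : Matrix (Fin 2) (Fin 2) ℂ} (hA : A.det = 1) (hB : B.det = 1)
    (hg : g ∈ SL2R) (h : A * Aᵀ = (g * B) * (g * B)ᵀ) : ∃ k ∈ SO2C, A = g * B * k := by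
  have hd : (g * B).det = 1 := by rw [det_mul, hg.1, hB, mul_one]
  set C := g * B
  have h1 : C * C.adjugate = 1 := by rw [mul_adjugate, hd, one_smul]
  have h2 : C.adjugate * C = 1 := by rw [adjugate_mul, hd, one_smul]
  refine ⟨C.adjugate * A, ⟨by rw [det_mul, det_adjugate, hd, hA]; simp, ?_⟩, ?_⟩
  · apply mul_eq_one_comm.mp
    rw [transpose_mul, Matrix.mul_assoc, ← Matrix.mul_assoc A, h, Matrix.mul_assoc C,
      ← transpose_mul, h2, transpose_one, Matrix.mul_one, h2]
  · rw [← Matrix.mul_assoc, h1, Matrix.one_mul]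

lemma key_theta (θ : ℝ) (hc : 0 < Real.cos (2 * θ)) :
    ∃ g ∈ SL2R, ∃ k ∈ SO2C,
      !![Complex.exp (Complex.I * (θ : ℂ)), 0; 0, Complex.exp (-(Complex.I * (θ : ℂ)))] =
        g * !![1, Complex.I * ((Real.sin (2 * θ) : ℝ) : ℂ); 0, 1] * k := by
  obtain ⟨q, hq0, hq⟩ : ∃ q : ℝ, 0 < q ∧ 2 * q ^ 2 = Real.cos (2 * θ) :=
    ⟨√(Real.cos (2 * θ) / 2), by positivity, by rw [Real.sq_sqrt (by positivity)]; ring⟩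
  obtain ⟨p, hp⟩ : ∃ p : ℝ, 2 * p * q = 1 := ⟨1 / (2 * q), by field_simp⟩
  have hs : Real.sin (2 * θ) ^ 2 = 1 - 4 * q ^ 4 := by
    rw [Real.sin_sq, ← hq]; ring
  have e1 : Complex.exp (Complex.I * θ) * Complex.exp (Complex.I * θ) =
      2 * (q : ℂ) ^ 2 + Complex.I * ((Real.sin (2 * θ) : ℝ) : ℂ) := by
    rw [← Complex.exp_add, show Complex.I * (θ : ℂ) + Complex.I * θ = ((2 * θ : ℝ) : ℂ) * Complex.I by
      push_cast; ring, Complex.exp_mul_I, ← Complex.ofReal_cos, ← Complex.ofReal_sin, ← hq]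
    push_cast; ring
  have e2 : Complex.exp (-(Complex.I * θ)) * Complex.exp (-(Complex.I * θ)) =
      2 * (q : ℂ) ^ 2 - Complex.I * ((Real.sin (2 * θ) : ℝ) : ℂ) := by
    rw [← Complex.exp_add, show -(Complex.I * (θ : ℂ)) + -(Complex.I * θ)
        = ((-(2 * θ) : ℝ) : ℂ) * Complex.I by
      push_cast; ring, Complex.exp_mul_I, ← Complex.ofReal_cos, ← Complex.ofReal_sin,
      Real.cos_neg, Real.sin_neg, ← hq]
    push_cast; ring
  generalize Real.sin (2 * θ) = s at *
  have hpC : 2 * (p : ℂ) * q = 1 := by exact_mod_cast hp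
  have hsC : (s : ℂ) ^ 2 = 1 - 4 * (q : ℂ) ^ 4 := by exact_mod_cast hs
  have hI := Complex.I_sq
  have hg : !![(p : ℂ), q; -p, q] ∈ SL2R := by
    refine ⟨by rw [det_fin_two_of]; linear_combination hpC, fun i j => ?_⟩
    fin_cases i <;> fin_cases j <;> simp
  refine ⟨_, hg, key_factor ?_ ?_ hg ?_⟩
  · rw [det_fin_two_of, ← Complex.exp_add]; simp
  · rw [det_fin_two_of]; simp
  · generalize Complex.exp (Complex.I * θ) = a at *
    generalize Complex.exp (-(Complex.I * θ)) = b at *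
    generalize Complex.I = I at *
    have h4 : 4 * (p : ℂ) ^ 2 * q ^ 2 = 1 := by linear_combination (2 * (p : ℂ) * q + 1) * hpC
    ext i j
    fin_cases i <;> fin_cases j <;> simp [Matrix.mul_apply, Fin.sum_univ_two]
    · rw [e1]
      linear_combination (-(p : ℂ) ^ 2 * s ^ 2) * hI + (p : ℂ) ^ 2 * hsC - q ^ 2 * h4 - I * s * hpC
    · linear_combination ((p : ℂ) ^ 2 * s ^ 2) * hI - (p : ℂ) ^ 2 * hsC + q ^ 2 * h4
    · linear_combination ((p : ℂ) ^ 2 * s ^ 2) * hI - (p : ℂ) ^ 2 * hsC + q ^ 2 * h4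
    · rw [e2]
      linear_combination (-(p : ℂ) ^ 2 * s ^ 2) * hI + (p : ℂ) ^ 2 * hsC - q ^ 2 * h4 + I * s * hpC

/-- the preimage in `SL(2,ℂ)` of the crown domain of
`SL(2,ℝ)/SO(2)`, i.e. `⋃_{|θ|<π/4} SL(2,ℝ)·diag(e^{iθ},e^{-iθ})·SO(2,ℂ)`,
equals `⋃_{|x|<1} SL(2,ℝ)·u_x·SO(2,ℂ)` with `u_x = [[1, ix],[0,1]]`. -/
theorem stmt_4 :
    {m : Matrix (Fin 2) (Fin 2) ℂ | ∃ θ : ℝ, θ ∈ Set.Ioo (-(Real.pi / 4)) (Real.pi / 4) ∧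
        ∃ g ∈ SL2R, ∃ k ∈ SO2C,
          m = g * !![Complex.exp (Complex.I * (θ : ℂ)), 0;
                     0, Complex.exp (-(Complex.I * (θ : ℂ)))] * k} =
    {m : Matrix (Fin 2) (Fin 2) ℂ | ∃ x : ℝ, x ∈ Set.Ioo (-1 : ℝ) 1 ∧
        ∃ g ∈ SL2R, ∃ k ∈ SO2C,
          m = g * !![1, Complex.I * (x : ℂ); 0, 1] * k} := by
  ext m
  constructor
  · rintro ⟨θ, ⟨h1, h2⟩, g, hg, k, hk, rfl⟩
    have hc : 0 < Real.cos (2 * θ) := Real.cos_pos_of_mem_Ioo ⟨by linarith, by linarith⟩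
    obtain ⟨g', hg', k', hk', e⟩ := key_theta θ hc
    have := Real.sin_sq_add_cos_sq (2 * θ)
    refine ⟨Real.sin (2 * θ), ⟨by nlinarith, by nlinarith⟩, g * g', SL2R_mul hg hg',
      k' * k, SO2C_mul hk' hk, ?_⟩
    rw [e]
    simp only [Matrix.mul_assoc]
  · rintro ⟨x, ⟨h1, h2⟩, g, hg, k, hk, rfl⟩
    have a1 := Real.neg_pi_div_two_lt_arcsin.mpr h1
    have a2 := Real.arcsin_lt_pi_div_two.mpr h2
    have h2t : 2 * (Real.arcsin x / 2) = Real.arcsin x := by ring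
    obtain ⟨g', hg', k', hk', e⟩ := key_theta (Real.arcsin x / 2)
      (by rw [h2t]; exact Real.cos_pos_of_mem_Ioo ⟨a1, a2⟩)
    rw [h2t, Real.sin_arcsin h1.le h2.le] at e
    refine ⟨Real.arcsin x / 2, ⟨by linarith, by linarith⟩, g * g'.adjugate,
      SL2R_mul hg (SL2R_inv hg'), k'ᵀ * k, SO2C_mul (SO2C_transpose hk') hk, ?_⟩
    rw [e]
    have i1 : g'.adjugate * g' = 1 := by rw [adjugate_mul, hg'.1, one_smul]
    have i2 : k' * k'ᵀ = 1 := mul_eq_one_comm.mp hk'.2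
    generalize !![1, Complex.I * (x : ℂ); 0, 1] = U
    calc g * U * k = g * (1 * U * 1) * k := by simp
      _ = g * ((g'.adjugate * g') * U * (k' * k'ᵀ)) * k := by rw [i1, i2]
      _ = _ := by simp only [Matrix.mul_assoc]
end

section
/- One has the equality of subsets of Sp(2n,ℂ): ⋃_{t ∈ (−π/4, π/4)ⁿ} Sp(2n,ℝ)·a_t·K_ℂ = ⋃_{s ∈ (−1, 1)ⁿ} Sp(2n,ℝ)·u_s·K_ℂ, where a_t = diag(e^{it₁}, …, e^{it_n}, e^{−it₁}, …, e^{−it_n}) and u_s = [[I_n, i·diag(s₁, …, s_n)], [0, I_n]]. (The left-hand side is the preimage in Sp(2n,ℂ) of the crown domain Ξ of Sp(2n,ℝ)/U(n), so this is the statement Ξ = G·exp(iΛ^{++})·x₀ of the Theorem on the symplectic group.) -/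
open Matrix

/-- The standard symplectic form matrix `J = [[0, I],[−I, 0]]` (over `ℂ`),
with respect to the index set `Fin n ⊕ Fin n`. -/
noncomputable def Jmat (n : ℕ) : Matrix (Fin n ⊕ Fin n) (Fin n ⊕ Fin n) ℂ :=
  Matrix.fromBlocks 0 1 (-1) 0

/-- The complex symplectic group `Sp(2n,ℂ) = {g : gᵀJg = J}`. -/
noncomputable def SpC (n : ℕ) : Set (Matrix (Fin n ⊕ Fin n) (Fin n ⊕ Fin n) ℂ) :=
  {g | gᵀ * Jmat n * g = Jmat n}

/-- The real symplectic group `Sp(2n,ℝ)`, viewed as the real-entried matrices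
in `Sp(2n,ℂ)`. -/
noncomputable def SpR (n : ℕ) : Set (Matrix (Fin n ⊕ Fin n) (Fin n ⊕ Fin n) ℂ) :=
  {g | g ∈ SpC n ∧ ∀ i j, (g i j).im = 0}

/-- `K_ℂ = {k ∈ Sp(2n,ℂ) : kᵀk = 1}`, the complexified maximal compact subgroup. -/
noncomputable def KC (n : ℕ) : Set (Matrix (Fin n ⊕ Fin n) (Fin n ⊕ Fin n) ℂ) :=
  {k | k ∈ SpC n ∧ kᵀ * k = 1}

/-- `a_t = diag(e^{it₁},…,e^{itₙ},e^{-it₁},…,e^{-itₙ})`. -/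
noncomputable def aMat (n : ℕ) (t : Fin n → ℝ) :
    Matrix (Fin n ⊕ Fin n) (Fin n ⊕ Fin n) ℂ :=
  Matrix.fromBlocks (Matrix.diagonal fun j => Complex.exp (Complex.I * (t j : ℂ))) 0 0
    (Matrix.diagonal fun j => Complex.exp (-(Complex.I * (t j : ℂ))))

/-- `u_s = [[I, i·diag(s₁,…,sₙ)],[0, I]]`. -/
noncomputable def uMat (n : ℕ) (s : Fin n → ℝ) :
    Matrix (Fin n ⊕ Fin n) (Fin n ⊕ Fin n) ℂ :=
  Matrix.fromBlocks 1 (Matrix.diagonal fun j => Complex.I * (s j : ℂ)) 0 1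


noncomputable def Dm (n : ℕ) (a b c d : Fin n → ℂ) :
    Matrix (Fin n ⊕ Fin n) (Fin n ⊕ Fin n) ℂ :=
  Matrix.fromBlocks (diagonal a) (diagonal b) (diagonal c) (diagonal d)

lemma Dm_mul (n : ℕ) (a b c d a' b' c' d' : Fin n → ℂ) :
    Dm n a b c d * Dm n a' b' c' d' =
      Dm n (fun j => a j * a' j + b j * c' j) (fun j => a j * b' j + b j * d' j)
        (fun j => c j * a' j + d j * c' j) (fun j => c j * b' j + d j * d' j) := by
  simp [Dm, Matrix.fromBlocks_multiply, Matrix.diagonal_mul_diagonal, Matrix.diagonal_add]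

lemma Dm_transpose (n : ℕ) (a b c d : Fin n → ℂ) :
    (Dm n a b c d)ᵀ = Dm n a c b d := by
  simp [Dm, Matrix.fromBlocks_transpose]

lemma Dm_J (n : ℕ) : Jmat n = Dm n (fun _ => 0) (fun _ => 1) (fun _ => -1) (fun _ => 0) := by
  have h : (diagonal fun _ : Fin n => (-1 : ℂ)) = -1 := by
    rw [← Matrix.diagonal_one, Matrix.diagonal_neg]
  simp [Dm, Jmat, h]

lemma Dm_one (n : ℕ) : 1 = Dm n (fun _ => 1) (fun _ => 0) (fun _ => 0) (fun _ => 1) := by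
  simp [Dm]

lemma Dm_congr {n : ℕ} {a b c d a' b' c' d' : Fin n → ℂ} (h1 : ∀ j, a j = a' j)
    (h2 : ∀ j, b j = b' j) (h3 : ∀ j, c j = c' j) (h4 : ∀ j, d j = d' j) :
    Dm n a b c d = Dm n a' b' c' d' := by
  rw [funext h1, funext h2, funext h3, funext h4]

lemma Dm_SpC {n : ℕ} {a b c d : Fin n → ℂ} (h : ∀ j, a j * d j - b j * c j = 1) :
    Dm n a b c d ∈ SpC n := by
  show _ = _
  rw [Dm_J, Dm_transpose, Dm_mul, Dm_mul]
  apply Dm_congr <;> intro j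
  · ring
  · linear_combination h j
  · linear_combination -h j
  · ring

lemma Dm_SpR {n : ℕ} {a b c d : Fin n → ℝ} (h : ∀ j, a j * d j - b j * c j = 1) :
    Dm n (fun j => (a j : ℂ)) (fun j => (b j : ℂ)) (fun j => (c j : ℂ)) (fun j => (d j : ℂ))
      ∈ SpR n := by
  refine ⟨Dm_SpC fun j => by exact_mod_cast h j, ?_⟩
  rintro (i | i) (j | j) <;> by_cases hij : i = j <;> simp [Dm, hij]

lemma Dm_KC {n : ℕ} {p q : Fin n → ℂ} (h : ∀ j, p j ^ 2 + q j ^ 2 = 1) :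
    Dm n p q (fun j => -q j) p ∈ KC n := by
  refine ⟨Dm_SpC fun j => by linear_combination h j, ?_⟩
  rw [Dm_transpose, Dm_mul, Dm_one]
  apply Dm_congr <;> intro j
  · linear_combination h j
  · ring
  · ring
  · linear_combination h j

lemma mul_SpC {n : ℕ} {g h : Matrix (Fin n ⊕ Fin n) (Fin n ⊕ Fin n) ℂ}
    (hg : g ∈ SpC n) (hh : h ∈ SpC n) : g * h ∈ SpC n := by
  have hg' : gᵀ * Jmat n * g = Jmat n := hg
  have hh' : hᵀ * Jmat n * h = Jmat n := hh
  show (g * h)ᵀ * Jmat n * (g * h) = Jmat n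
  calc _ = hᵀ * (gᵀ * Jmat n * g) * h := by simp only [transpose_mul, Matrix.mul_assoc]
    _ = _ := by rw [hg', hh']

lemma mul_SpR {n : ℕ} {g h : Matrix (Fin n ⊕ Fin n) (Fin n ⊕ Fin n) ℂ}
    (hg : g ∈ SpR n) (hh : h ∈ SpR n) : g * h ∈ SpR n := by
  refine ⟨mul_SpC hg.1 hh.1, fun i j => ?_⟩
  rw [Matrix.mul_apply, Complex.im_sum]
  exact Finset.sum_eq_zero fun k _ => by rw [Complex.mul_im, hg.2, hh.2]; simp

lemma mul_KC {n : ℕ} {g h : Matrix (Fin n ⊕ Fin n) (Fin n ⊕ Fin n) ℂ}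
    (hg : g ∈ KC n) (hh : h ∈ KC n) : g * h ∈ KC n := by
  refine ⟨mul_SpC hg.1 hh.1, ?_⟩
  calc _ = hᵀ * (gᵀ * g) * h := by simp only [transpose_mul, Matrix.mul_assoc]
    _ = _ := by rw [hg.2, Matrix.mul_one, hh.2]

lemma key (n : ℕ) (t : Fin n → ℝ) (ht : ∀ j, |t j| < Real.pi / 4) :
    (∃ g ∈ SpR n, ∃ k ∈ KC n, uMat n (fun j => Real.sin (2 * t j)) = g * aMat n t * k) ∧
    (∃ g ∈ SpR n, ∃ k ∈ KC n, aMat n t = g * uMat n (fun j => Real.sin (2 * t j)) * k) := by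
  have hc : ∀ j, 0 < Real.cos (2 * t j) := fun j => by
    have := abs_lt.1 (ht j)
    exact Real.cos_pos_of_mem_Ioo ⟨by linarith, by linarith⟩
  obtain ⟨y, hy⟩ : ∃ y : Fin n → ℝ, ∀ j, 2 * Real.cos (2 * t j) * y j ^ 2 = 1 := by
    refine ⟨fun j => √((2 * Real.cos (2 * t j))⁻¹), fun j => ?_⟩
    have := hc j
    rw [Real.sq_sqrt (by positivity)]
    field_simp
  have hyC : ∀ j, 2 * (Real.cos (2 * t j) : ℂ) * (y j : ℂ) ^ 2 = 1 := fun j => by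
    exact_mod_cast hy j
  set E : Fin n → ℂ := fun j => Complex.exp (Complex.I * (t j : ℂ)) with hE
  set F : Fin n → ℂ := fun j => Complex.exp (-(Complex.I * (t j : ℂ))) with hF
  have hEF : ∀ j, E j * F j = 1 := fun j => by
    rw [hE, hF]; simp [← Complex.exp_add]
  have hE2 : ∀ j, E j ^ 2 = Real.cos (2 * t j) + Real.sin (2 * t j) * Complex.I := fun j => by
    rw [hE]; push_cast; rw [← Complex.exp_mul_I, ← Complex.exp_nat_mul]; congr 1; push_cast; ring
  have hF2 : ∀ j, F j ^ 2 = Real.cos (2 * t j) - Real.sin (2 * t j) * Complex.I := fun j => by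
    rw [hF]; push_cast; rw [← Complex.exp_nat_mul]
    have := Complex.exp_mul_I (-(2 * (t j : ℂ)))
    rw [Complex.cos_neg, Complex.sin_neg] at this
    rw [sub_eq_add_neg, ← neg_mul (Complex.sin _), ← this]
    congr 1; push_cast; ring
  have ha : aMat n t = Dm n E (fun _ => 0) (fun _ => 0) F := by simp [aMat, Dm, hE, hF]
  have hu : uMat n (fun j => Real.sin (2 * t j)) = Dm n (fun _ => 1)
      (fun j => Complex.I * (Real.sin (2 * t j) : ℝ)) (fun _ => 0) (fun _ => 1) := by
    simp [uMat, Dm]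
  rw [ha, hu]
  generalize hC : (fun j => Real.cos (2 * t j)) = C at *
  generalize hS : (fun j => Real.sin (2 * t j)) = S at *
  replace hC : ∀ j, Real.cos (2 * t j) = C j := fun j => congrFun hC j
  replace hS : ∀ j, Real.sin (2 * t j) = S j := fun j => congrFun hS j
  simp only [hC, hS] at *
  clear_value E F
  constructor
  · refine ⟨_, Dm_SpR (a := fun j => y j * C j) (b := fun j => -(y j * C j)) (c := y) (d := y)
      (fun j => by linear_combination hy j), _,
      Dm_KC (p := fun j => y j * F j) (q := fun j => y j * E j)
      (fun j => by linear_combination hyC j + (y j : ℂ) ^ 2 * (hE2 j + hF2 j)), ?_⟩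
    rw [Dm_mul, Dm_mul]
    apply Dm_congr <;> intro j <;> push_cast
    · linear_combination -hyC j - 2 * (y j : ℂ) ^ 2 * C j * hEF j
    · linear_combination -(y j : ℂ) ^ 2 * C j * (hE2 j - hF2 j) - Complex.I * S j * hyC j
    · ring
    · linear_combination -hyC j - (y j : ℂ) ^ 2 * (hE2 j + hF2 j)
  · refine ⟨_, Dm_SpR (a := y) (b := fun j => (y j * C j)) (c := fun j => -y j)
      (d := fun j => y j * C j)
      (fun j => by linear_combination hy j), _,
      Dm_KC (p := fun j => y j * F j) (q := fun j => -(y j * E j))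
      (fun j => by linear_combination hyC j + (y j : ℂ) ^ 2 * (hE2 j + hF2 j)), ?_⟩
    rw [Dm_mul, Dm_mul]
    apply Dm_congr <;> intro j <;> push_cast
    · linear_combination -E j * hyC j + (y j : ℂ) ^ 2 * (F j * hEF j - E j * hF2 j)
    · linear_combination (y j : ℂ) ^ 2 * (F j * hE2 j - E j * hEF j)
    · linear_combination (y j : ℂ) ^ 2 * (E j * hF2 j - F j * hEF j)
    · linear_combination -F j * hyC j - (y j : ℂ) ^ 2 * (F j * hE2 j - E j * hEF j)

/-- the preimage in `Sp(2n,ℂ)` of the crown domain of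
`Sp(2n,ℝ)/U(n)`, i.e. `⋃_{t ∈ (-π/4,π/4)ⁿ} Sp(2n,ℝ)·a_t·K_ℂ`, equals
`⋃_{s ∈ (-1,1)ⁿ} Sp(2n,ℝ)·u_s·K_ℂ`; this is `Ξ = G·exp(iΛ^{++})·x₀`. -/
theorem stmt_15 (n : ℕ) :
    {m : Matrix (Fin n ⊕ Fin n) (Fin n ⊕ Fin n) ℂ | ∃ t : Fin n → ℝ,
        (∀ j, |t j| < Real.pi / 4) ∧ ∃ g ∈ SpR n, ∃ k ∈ KC n, m = g * aMat n t * k} =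
    {m : Matrix (Fin n ⊕ Fin n) (Fin n ⊕ Fin n) ℂ | ∃ s : Fin n → ℝ,
        (∀ j, |s j| < 1) ∧ ∃ g ∈ SpR n, ∃ k ∈ KC n, m = g * uMat n s * k} := by
  ext m
  constructor
  · rintro ⟨t, ht, g, hg, k, hk, rfl⟩
    obtain ⟨-, g', hg', k', hk', h⟩ := key n t ht
    refine ⟨fun j => Real.sin (2 * t j), fun j => ?_, _, mul_SpR hg hg', _, mul_KC hk' hk, ?_⟩
    rotate_left
    · rw [h]; simp only [Matrix.mul_assoc]
    · have := abs_lt.1 (ht j)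
      have hc : 0 < Real.cos (2 * t j) :=
        Real.cos_pos_of_mem_Ioo ⟨by linarith, by linarith⟩
      rw [← sq_lt_one_iff_abs_lt_one]
      nlinarith [Real.sin_sq_add_cos_sq (2 * t j)]
  · rintro ⟨s, hs, g, hg, k, hk, rfl⟩
    have ht : ∀ j, |Real.arcsin (s j) / 2| < Real.pi / 4 := fun j => by
      have h := abs_lt.1 (hs j)
      have h1 := Real.arcsin_lt_pi_div_two.2 h.2
      have h2 := Real.neg_pi_div_two_lt_arcsin.2 h.1
      rw [abs_lt]; constructor <;> linarith
    obtain ⟨⟨g', hg', k', hk', h⟩, -⟩ := key n (fun j => Real.arcsin (s j) / 2) ht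
    have hs' : (fun j => Real.sin (2 * (Real.arcsin (s j) / 2))) = s := by
      funext j
      have h := abs_lt.1 (hs j)
      rw [mul_div_cancel₀ _ two_ne_zero, Real.sin_arcsin h.1.le h.2.le]
    rw [hs'] at h
    refine ⟨_, ht, _, mul_SpR hg hg', _, mul_KC hk' hk, ?_⟩
    rw [h]; simp only [Matrix.mul_assoc]
end
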